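/- Let δ ∈ ℤ and let λ be a partition. Then #{(i,j) ∈ [λ] : d(i,j) = 1 − δ} = min(a, b), where b := deg_δ(λ) is the number of vertices of L labelled × in the weight diagram x_λ and a := #{n ∈ L : no entry of e_δ(λ) has absolute value n} is the number of vertices labelled ∘. -/

import Mathlib

open Polynomial

/-- A partition: a weakly decreasing, finitely supported sequence of naturals λ_1, λ_2, …. -/
structure Ptn where
  toFun : ℕ+ → ℕ
  antitone' : ∀ i j : ℕ+, i ≤ j → toFun j ≤ toFun i
  finite_support' : ∃ N : ℕ+, ∀ i : ℕ+, N ≤ i → toFun i = 0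

namespace Ptn

/-- The transpose partition: λ^T_i = #{k ≥ 1 : λ_k ≥ i}. -/
noncomputable def transpose (p : Ptn) (i : ℕ+) : ℕ :=
  Set.ncard {k : ℕ+ | (i : ℕ) ≤ p.toFun k}

/-- The empty partition. -/
def empty : Ptn where
  toFun := fun _ => 0
  antitone' := fun _ _ _ => le_refl 0
  finite_support' := ⟨1, fun _ _ => rfl⟩

end Ptn

/-- e_δ(λ)_i = λ^T_i − δ/2 − i + 1. -/
noncomputable def ed (δ : ℤ) (p : Ptn) (i : ℕ+) : ℚ :=
  (p.transpose i : ℚ) - (δ : ℚ) / 2 - ((i : ℕ) : ℚ) + 1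

/-- The δ-degree of singularity: #{(i,j) : 1 ≤ i < j, e_δ(λ)_i + e_δ(λ)_j = 0}. -/
noncomputable def degd (δ : ℤ) (p : Ptn) : ℕ :=
  Set.ncard {q : ℕ+ × ℕ+ | q.1 < q.2 ∧ ed δ p q.1 + ed δ p q.2 = 0}

/-- The vertex set L: nonnegative integers if δ is even, {1/2, 3/2, …} if δ is odd. -/
def Lset (δ : ℤ) : Set ℚ :=
  {n : ℚ | 0 ≤ n ∧ ∃ k : ℤ, n + (δ : ℚ) / 2 = (k : ℚ)}

/-- Vertex n is labelled ∘ in x_λ: no entry of e_δ(λ) has absolute value n. -/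
def IsCirc (δ : ℤ) (p : Ptn) (n : ℚ) : Prop := ∀ i : ℕ+, |ed δ p i| ≠ n

/-- Vertex n is labelled × in x_λ: n > 0 and both n and −n occur as entries. -/
def IsTimes (δ : ℤ) (p : Ptn) (n : ℚ) : Prop :=
  0 < n ∧ (∃ i : ℕ+, ed δ p i = n) ∧ (∃ i : ℕ+, ed δ p i = -n)

/-- Vertex n is labelled ∧ in x_λ: n > 0, n occurs as an entry and −n does not. -/
def IsUp (δ : ℤ) (p : Ptn) (n : ℚ) : Prop :=
  0 < n ∧ (∃ i : ℕ+, ed δ p i = n) ∧ ¬ (∃ i : ℕ+, ed δ p i = -n)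

/-- Vertex n is labelled ∨ in x_λ: n > 0, −n occurs and n does not, or n = 0 and 0 occurs. -/
def IsDown (δ : ℤ) (p : Ptn) (n : ℚ) : Prop :=
  (0 < n ∧ (∃ i : ℕ+, ed δ p i = -n) ∧ ¬ (∃ i : ℕ+, ed δ p i = n)) ∨
  (n = 0 ∧ ∃ i : ℕ+, ed δ p i = 0)

/-- q is obtained from p by adding one box, in row k. -/
def AddBoxAt (p q : Ptn) (k : ℕ+) : Prop :=
  q.toFun k = p.toFun k + 1 ∧ ∀ t : ℕ+, t ≠ k → q.toFun t = p.toFun t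

/-- q is obtained from p by removing one box, from row l. -/
def RemoveBoxAt (p q : Ptn) (l : ℕ+) : Prop :=
  q.toFun l + 1 = p.toFun l ∧ ∀ t : ℕ+, t ≠ l → q.toFun t = p.toFun t

/-- A box is addable to p at position (k,i): λ_k + 1 = i and increasing the k-th part
yields a partition. -/
def AddableAt (p : Ptn) (k i : ℕ+) : Prop :=
  p.toFun k + 1 = (i : ℕ) ∧ ∃ q : Ptn, AddBoxAt p q k

/-- A box is removable from p at position (l,j): λ_l = j and decreasing the l-th part
yields a partition. -/
def RemovableAt (p : Ptn) (l j : ℕ+) : Prop :=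
  p.toFun l = (j : ℕ) ∧ ∃ q : Ptn, RemoveBoxAt p q l

/-- Edge of the Young graph: q is obtained from p by adding or removing a single box. -/
def YoungEdge (p q : Ptn) : Prop := (∃ k, AddBoxAt p q k) ∨ (∃ k, AddBoxAt q p k)

/-- d(i,j) = λ_i + λ_j − i − j + 1 if i ≤ j, and −λ^T_i − λ^T_j + i + j − 1 if i > j. -/
noncomputable def dbox (p : Ptn) (i j : ℕ+) : ℤ :=
  if (i : ℕ) ≤ (j : ℕ) then
    (p.toFun i : ℤ) + (p.toFun j : ℤ) - ((i : ℕ) : ℤ) - ((j : ℕ) : ℤ) + 1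
  else
    -(p.transpose i : ℤ) - (p.transpose j : ℤ) + ((i : ℕ) : ℤ) + ((j : ℕ) : ℤ) - 1

/-- Hook length h(i,j) = λ_i − j + λ^T_j − i + 1. -/
noncomputable def hook (p : Ptn) (i j : ℕ+) : ℤ :=
  (p.toFun i : ℤ) - ((j : ℕ) : ℤ) + (p.transpose j : ℤ) - ((i : ℕ) : ℤ) + 1

/-- The King polynomial P_λ(u) = ∏_{(i,j)∈[λ]} (u − 1 + d(i,j)) / h(i,j) ∈ ℚ[u]. -/
noncomputable def king (p : Ptn) : Polynomial ℚ :=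
  ∏ᶠ (q : ℕ+ × ℕ+) (_ : (q.2 : ℕ) ≤ p.toFun q.1),
    Polynomial.C ((hook p q.1 q.2 : ℚ))⁻¹ *
      (Polynomial.X + Polynomial.C ((dbox p q.1 q.2 : ℚ) - 1))

/-- (ρ_δ)_i = −δ/2 − i + 1. -/
def rhod (δ : ℤ) (i : ℕ+) : ℚ := -(δ : ℚ) / 2 - ((i : ℕ) : ℚ) + 1

/-- A sequence is dominant if it is strictly decreasing. -/
def Dominant (x : ℕ+ → ℚ) : Prop := ∀ i j : ℕ+, i < j → x j < x i

/-- ε_i: the sequence with 1 in position i and 0 elsewhere. -/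
def eps (i : ℕ+) : ℕ+ → ℚ := fun j => if j = i then 1 else 0

/-- Two sequences are adjacent if they differ by ±ε_i for some i. -/
def AdjacentSeq (x y : ℕ+ → ℚ) : Prop := ∃ i : ℕ+, y = x + eps i ∨ y = x - eps i

/-- x lies in the connected component of ρ_δ in the dominant part of the lattice graph:
x is dominant and is joined to ρ_δ by a finite chain of pairwise adjacent dominant
sequences. -/
def InComponent (δ : ℤ) (x : ℕ+ → ℚ) : Prop :=
  Dominant x ∧ ∃ (r : ℕ) (c : ℕ → ℕ+ → ℚ),
    c 0 = rhod δ ∧ c r = x ∧ (∀ t ≤ r, Dominant (c t)) ∧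
    ∀ t < r, AdjacentSeq (c t) (c (t + 1))

/-- λ ∈ A_δ: λ is joined to ∅ in the Young graph by a chain of δ-regular partitions. -/
def InAdelta (δ : ℤ) (p : Ptn) : Prop :=
  ∃ (r : ℕ) (c : ℕ → Ptn), c 0 = Ptn.empty ∧ c r = p ∧
    (∀ t ≤ r, degd δ (c t) = degd δ Ptn.empty) ∧
    ∀ t < r, YoungEdge (c t) (c (t + 1))


namespace Ptn

lemma le_transpose_iff (p : Ptn) (i j : ℕ+) :
    (j : ℕ) ≤ p.transpose i ↔ (i : ℕ) ≤ p.toFun j := by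
  have hfin : {k : ℕ+ | (i : ℕ) ≤ p.toFun k}.Finite := by
    obtain ⟨N, hN⟩ := p.finite_support'
    apply (Set.finite_Iic N).subset
    intro k hk
    by_contra h
    have h1 := hN k (le_of_lt (not_le.mp h))
    have h2 := i.pos
    simp only [Set.mem_ofPred_eq] at hk
    omega
  have hcard : ∀ k : ℕ+, (Set.Iic k).ncard = (k : ℕ) := by
    intro k
    have : Set.Iic k = ((Finset.Icc 1 k : Finset ℕ+) : Set ℕ+) := by
      ext x; simp
    rw [this, Set.ncard_coe_finset, PNat.card_Icc]
    simp
  constructor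
  · intro h
    by_contra hc
    have hsub : {k : ℕ+ | (i : ℕ) ≤ p.toFun k} ⊂ Set.Iic j := by
      refine ⟨?_, ?_⟩
      · intro k hk
        by_contra hkj
        have := p.antitone' j k (le_of_lt (not_le.mp hkj))
        simp only [Set.mem_ofPred_eq] at hk
        omega
      · intro h'
        exact hc (h' (Set.mem_Iic.mpr le_rfl))
    have := Set.ncard_lt_ncard hsub (Set.finite_Iic j)
    rw [hcard] at this
    unfold transpose at h
    omega
  · intro h
    rw [← hcard j]
    apply Set.ncard_le_ncard _ hfin
    intro k hk
    exact le_trans h (p.antitone' k j hk)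

/-- Shifted integer version of the sequence of the transposed partition. -/
noncomputable def EE (p : Ptn) (i : ℕ+) : ℤ := (p.transpose i : ℤ) - (i : ℕ) + 1

/-- The complementary sequence. -/
def FF (p : Ptn) (j : ℕ+) : ℤ := ((j : ℕ) : ℤ) - p.toFun j

lemma transpose_anti (p : Ptn) (i j : ℕ+) (h : i ≤ j) : p.transpose j ≤ p.transpose i := by
  by_contra hc
  push Not at hc
  have h0 : 0 < p.transpose j := by omega
  have h1 := (p.le_transpose_iff j ⟨p.transpose j, h0⟩).1 le_rfl
  have h2 : ((i : ℕ+) : ℕ) ≤ j := h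
  have h3 := (p.le_transpose_iff i ⟨p.transpose j, h0⟩).2 (le_trans h2 h1)
  simp only [PNat.mk_coe] at h3
  omega

lemma EE_lt (p : Ptn) {i j : ℕ+} (h : i < j) : p.EE j < p.EE i := by
  have h1 := p.transpose_anti i j h.le
  have h2 : ((i : ℕ+) : ℕ) < j := h
  unfold EE
  omega

lemma FF_lt (p : Ptn) {i j : ℕ+} (h : i < j) : p.FF i < p.FF j := by
  have h1 := p.antitone' i j h.le
  have h2 : ((i : ℕ+) : ℕ) < j := h
  unfold FF
  omega

lemma FF_mono (p : Ptn) : StrictMono p.FF := fun _ _ h => p.FF_lt h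
lemma EE_anti (p : Ptn) : StrictAnti p.EE := fun _ _ h => p.EE_lt h

lemma EE_ne_FF (p : Ptn) (i j : ℕ+) : p.EE i ≠ p.FF j := by
  have := p.le_transpose_iff i j
  unfold EE FF
  by_cases h : (i : ℕ) ≤ p.toFun j
  · have := this.2 h; omega
  · have : ¬ (j : ℕ) ≤ p.transpose i := fun h' => h (this.1 h')
    omega

lemma cover (p : Ptn) (t : ℤ) (ht : ∀ i, p.EE i ≠ t) : ∃ j, p.FF j = t := by
  classical
  have hex : ∃ i : ℕ+, p.EE i ≤ t := by
    let n : ℕ := (p.transpose 1 + 1 - t).toNat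
    refine ⟨⟨n + 1, Nat.succ_pos _⟩, ?_⟩
    have h1 := p.transpose_anti 1 ⟨n + 1, Nat.succ_pos _⟩ one_le
    unfold EE
    simp only [PNat.mk_coe]
    omega
  let i := PNat.find hex
  have hi : p.EE i ≤ t := PNat.find_spec hex
  have hi' : p.EE i < t := lt_of_le_of_ne hi (ht i)
  have hpos : 0 < (t + i - 1).toNat := by
    unfold EE at hi'; omega
  let j : ℕ+ := ⟨(t + i - 1).toNat, hpos⟩
  have hj : ((j : ℕ) : ℤ) = t + i - 1 := by
    simp only [j, PNat.mk_coe]; omega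
  have hup : p.toFun j < i := by
    have := p.le_transpose_iff i j
    by_contra hc
    have := this.2 (not_lt.mp hc)
    unfold EE at hi'
    omega
  have hlow : (i : ℕ) ≤ p.toFun j + 1 := by
    by_cases h1 : (i : ℕ) = 1
    · omega
    · have hip := i.pos
      have hk : 0 < (i : ℕ) - 1 := by omega
      let k : ℕ+ := ⟨(i : ℕ) - 1, hk⟩
      have hkc : (k : ℕ) = (i : ℕ) - 1 := rfl
      have hlt : k < i := by
        show (k : ℕ) < i
        omega
      have h2 := PNat.find_min hex hlt
      have h3 := (p.le_transpose_iff k j).1 (by unfold EE at h2; omega)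
      omega
  refine ⟨j, ?_⟩
  unfold FF
  omega

/-- The set of entries. -/
def SS (p : Ptn) : Set ℤ := Set.range p.EE

lemma notMem_SS (p : Ptn) (t : ℤ) : t ∉ p.SS ↔ ∃ j, p.FF j = t := by
  constructor
  · intro h
    exact p.cover t (fun i hi => h ⟨i, hi⟩)
  · rintro ⟨j, rfl⟩ ⟨i, hi⟩
    exact p.EE_ne_FF i j hi

open Classical in
/-- Number of entries in the open interval. -/
noncomputable def cnt (p : Ptn) (a b : ℤ) : ℕ := ((Finset.Ioo a b).filter (· ∈ p.SS)).card

lemma cnt_EE (p : Ptn) {i j : ℕ+} (h : j < i) :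
    (p.cnt (p.EE i) (p.EE j) : ℤ) = (i : ℕ) - (j : ℕ) - 1 := by
  classical
  have : (Finset.Ioo (p.EE i) (p.EE j)).filter (· ∈ p.SS) = (Finset.Ioo j i).image p.EE := by
    ext t
    simp only [Finset.mem_filter, Finset.mem_Ioo, Finset.mem_image, SS, Set.mem_range]
    constructor
    · rintro ⟨⟨h1, h2⟩, k, rfl⟩
      exact ⟨k, ⟨p.EE_anti.lt_iff_gt.1 h2, p.EE_anti.lt_iff_gt.1 h1⟩, rfl⟩
    · rintro ⟨k, ⟨h1, h2⟩, rfl⟩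
      exact ⟨⟨p.EE_lt h2, p.EE_lt h1⟩, k, rfl⟩
  have h2 : ((j : ℕ+) : ℕ) < i := h
  unfold cnt
  rw [this, Finset.card_image_of_injective _ p.EE_anti.injective, PNat.card_Ioo]
  omega

lemma cnt_FF (p : Ptn) {i j : ℕ+} (h : i ≤ j) :
    (p.cnt (p.FF i) (p.FF j) : ℤ) = p.FF j - p.FF i - (j : ℕ) + (i : ℕ) := by
  classical
  rcases h.eq_or_lt with rfl | h
  · simp [cnt]
  have : (Finset.Ioo (p.FF i) (p.FF j)).filter (fun t => ¬ t ∈ p.SS)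
      = (Finset.Ioo i j).image p.FF := by
    ext t
    simp only [Finset.mem_filter, Finset.mem_Ioo, Finset.mem_image, notMem_SS]
    constructor
    · rintro ⟨⟨h1, h2⟩, k, rfl⟩
      exact ⟨k, ⟨p.FF_mono.lt_iff_lt.1 h1, p.FF_mono.lt_iff_lt.1 h2⟩, rfl⟩
    · rintro ⟨k, ⟨h1, h2⟩, rfl⟩
      exact ⟨⟨p.FF_lt h1, p.FF_lt h2⟩, k, rfl⟩
  have h3 := Finset.card_filter_add_card_filter_not (s := Finset.Ioo (p.FF i) (p.FF j))
    (· ∈ p.SS)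
  have h2 : ((i : ℕ+) : ℕ) < j := h
  have h4 := p.FF_lt h
  rw [this, Finset.card_image_of_injective _ p.FF_mono.injective, PNat.card_Ioo,
    Int.card_Ioo] at h3
  unfold cnt
  omega

/-- The walk. -/
noncomputable def GG (p : Ptn) (δ m : ℤ) : ℤ := p.cnt (δ - m) m - m + 1

open Classical in
lemma GG_succ (p : Ptn) (δ m : ℤ) (h : δ < 2 * m) :
    p.GG δ (m + 1) = p.GG δ m + (if m ∈ p.SS then 1 else 0)
      + (if δ - m ∈ p.SS then 1 else 0) - 1 := by
  have : Finset.Ioo (δ - (m + 1)) (m + 1) = insert m (insert (δ - m) (Finset.Ioo (δ - m) m)) := by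
    ext t
    simp only [Finset.mem_Ioo, Finset.mem_insert]
    omega
  have hm : δ - m ≠ m := by omega
  unfold GG cnt
  rw [this, Finset.filter_insert, Finset.filter_insert]
  split_ifs <;> simp [hm.symm] <;> ring

/-- Beyond a bound, everything is stable. -/
lemma exists_bound (p : Ptn) (δ : ℤ) : ∃ N : ℤ, δ < N ∧ δ < 2 * N ∧ p.GG δ N = 1 - δ ∧
    ∀ m, N ≤ m → m ∉ p.SS ∧ δ - m ∈ p.SS := by
  obtain ⟨K, hK⟩ := p.finite_support'
  have hT : ∀ i : ℕ+, p.toFun 1 < i → p.transpose i = 0 := by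
    intro i hi
    by_contra hc
    have h1 := (p.le_transpose_iff i 1).1 (by rw [PNat.one_coe]; omega)
    omega
  let N : ℤ := (K : ℕ) + p.toFun 1 + p.transpose 1 + |δ| + 1
  have hd := abs_nonneg δ
  have hd' := le_abs_self δ
  have hKpos := K.pos
  have hst : ∀ m, N ≤ m → ∃ i : ℕ+, ((i : ℕ) : ℤ) = 1 - δ + m ∧ p.EE i = δ - m := by
    intro m hm
    have hpos : 0 < (1 - δ + m).toNat := by omega
    refine ⟨⟨(1 - δ + m).toNat, hpos⟩, ?_, ?_⟩
    · simp only [PNat.mk_coe]; omega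
    · have := hT ⟨(1 - δ + m).toNat, hpos⟩ (by simp only [PNat.mk_coe]; omega)
      unfold EE
      rw [this]
      simp only [PNat.mk_coe]
      omega
  have hle : ∀ k, p.EE k < N := by
    intro k
    have := p.transpose_anti 1 k one_le
    unfold EE
    omega
  refine ⟨N, by omega, by omega, ?_, ?_⟩
  · obtain ⟨i, hi, hi'⟩ := hst N le_rfl
    classical
    have : (Finset.Ioo (δ - N) N).filter (· ∈ p.SS) = (Finset.Ico 1 i).image p.EE := by
      ext t
      rw [← hi']
      simp only [Finset.mem_filter, Finset.mem_Ioo, Finset.mem_image, Finset.mem_Ico, SS,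
        Set.mem_range]
      constructor
      · rintro ⟨⟨h1, h2⟩, k, rfl⟩
        exact ⟨k, ⟨one_le, p.EE_anti.lt_iff_gt.1 h1⟩, rfl⟩
      · rintro ⟨k, ⟨h1, h2⟩, rfl⟩
        exact ⟨⟨p.EE_lt h2, hle k⟩, k, rfl⟩
    unfold GG cnt
    rw [this, Finset.card_image_of_injective _ p.EE_anti.injective, PNat.card_Ico]
    simp only [PNat.one_coe]
    omega
  · intro m hm
    refine ⟨?_, ?_⟩
    · rintro ⟨k, hk⟩
      have := hle k
      omega
    · obtain ⟨i, _, h⟩ := hst m hm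
      exact ⟨i, h⟩

/-- Circles. -/
def setO (p : Ptn) (δ : ℤ) : Set ℤ := {m | δ ≤ 2 * m ∧ m ∉ p.SS ∧ δ - m ∉ p.SS}
/-- Crosses. -/
def setX (p : Ptn) (δ : ℤ) : Set ℤ := {m | δ < 2 * m ∧ m ∈ p.SS ∧ δ - m ∈ p.SS}

lemma ncard_circ (p : Ptn) (δ : ℤ) :
    Set.ncard {n : ℚ | n ∈ Lset δ ∧ IsCirc δ p n} = (p.setO δ).ncard := by
  have hinj : Function.Injective (fun m : ℤ => (m : ℚ) - (δ : ℚ) / 2) := by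
    intro a b h
    simpa using h
  rw [← Set.ncard_image_of_injective _ hinj]
  congr 1
  have hed : ∀ i, ed δ p i = (p.EE i : ℚ) - (δ : ℚ) / 2 := by
    intro i; unfold ed EE; push_cast; ring
  have key : ∀ m : ℤ, δ ≤ 2 * m →
      (IsCirc δ p ((m : ℚ) - (δ : ℚ) / 2) ↔ m ∉ p.SS ∧ δ - m ∉ p.SS) := by
    intro m hm
    have hm' : (0 : ℚ) ≤ (m : ℚ) - (δ : ℚ) / 2 := by
      have : (δ : ℚ) ≤ 2 * m := by exact_mod_cast hm
      linarith
    unfold IsCirc SS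
    simp only [Set.mem_range, not_exists, hed, ← forall_and]
    refine forall_congr' fun i => ?_
    rw [ne_eq, abs_eq hm', not_or]
    refine and_congr (not_congr ?_) (not_congr ?_)
    · rw [sub_left_inj]; exact Int.cast_inj
    · constructor
      · intro h
        have : (p.EE i : ℚ) = ((δ - m : ℤ) : ℚ) := by push_cast; linarith
        exact_mod_cast this
      · intro h
        rw [h]; push_cast; ring
  ext n
  simp only [Set.mem_ofPred_eq, Set.mem_image, Lset, setO]
  constructor
  · rintro ⟨⟨h0, k, hk⟩, hc⟩
    have hn : n = (k : ℚ) - (δ : ℚ) / 2 := by linarith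
    have hk' : δ ≤ 2 * k := by
      have : (δ : ℚ) ≤ 2 * k := by linarith
      exact_mod_cast this
    subst hn
    exact ⟨k, ⟨hk', (key k hk').1 hc⟩, rfl⟩
  · rintro ⟨m, ⟨hm, hm'⟩, rfl⟩
    refine ⟨⟨?_, m, by ring⟩, (key m hm).2 hm'⟩
    have : (δ : ℚ) ≤ 2 * m := by exact_mod_cast hm
    linarith

lemma ncard_times (p : Ptn) (δ : ℤ) : degd δ p = (p.setX δ).ncard := by
  have hed : ∀ i j, ed δ p i + ed δ p j = 0 ↔ p.EE i + p.EE j = δ := by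
    intro i j
    have : ed δ p i + ed δ p j = ((p.EE i + p.EE j - δ : ℤ) : ℚ) := by
      unfold ed EE; push_cast; ring
    rw [this]
    norm_cast
    omega
  unfold degd
  apply Set.ncard_congr (fun q _ => p.EE q.1)
  · rintro ⟨i, j⟩ ⟨h1, h2⟩
    rw [hed] at h2
    have h1' : i < j := h1
    have := p.EE_lt h1'
    simp only at h2 ⊢
    exact ⟨by omega, ⟨i, rfl⟩, ⟨j, by omega⟩⟩
  · rintro ⟨i, j⟩ ⟨i', j'⟩ ⟨h1, h2⟩ ⟨h1', h2'⟩ h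
    rw [hed] at h2 h2'
    simp only at h2 h2' h
    have e1 := p.EE_anti.injective h
    have e2 : j = j' := p.EE_anti.injective (by omega)
    rw [e1, e2]
  · rintro m ⟨h, ⟨i, hi⟩, ⟨j, hj⟩⟩
    have hij : i < j := p.EE_anti.lt_iff_gt.1 (by omega)
    refine ⟨(i, j), ⟨hij, (hed i j).2 (by omega)⟩, hi⟩

lemma ncard_boxO (p : Ptn) (δ : ℤ) :
    Set.ncard {q : ℕ+ × ℕ+ | q.1 ≤ q.2 ∧ (q.2 : ℕ) ≤ p.toFun q.1 ∧ p.FF q.1 + p.FF q.2 = δ}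
      = Set.ncard {m | m ∈ p.setO δ ∧ 1 ≤ p.GG δ m} := by
  have hG : ∀ i j, i ≤ j → p.FF i + p.FF j = δ → p.GG δ (p.FF j) = 1 + p.toFun i - (j : ℕ) := by
    intro i j hij h
    have : δ - p.FF j = p.FF i := by omega
    unfold GG
    rw [this, p.cnt_FF hij]
    unfold FF
    ring
  apply Set.ncard_congr (fun q _ => p.FF q.2)
  · rintro ⟨i, j⟩ ⟨h1, h2, h3⟩
    have h4 := p.FF_mono.monotone h1
    simp only at h1 h2 h3 h4 ⊢
    refine ⟨⟨by omega, (p.notMem_SS _).2 ⟨j, rfl⟩, (p.notMem_SS _).2 ⟨i, by omega⟩⟩, ?_⟩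
    rw [hG i j h1 h3]
    omega
  · rintro ⟨i, j⟩ ⟨i', j'⟩ ⟨h1, _, h2⟩ ⟨h1', _, h2'⟩ h
    simp only at h2 h2' h
    have e1 := p.FF_mono.injective h
    have e2 : i = i' := p.FF_mono.injective (by omega)
    rw [e1, e2]
  · rintro m ⟨⟨h0, h1, h2⟩, h3⟩
    obtain ⟨j, hj⟩ := (p.notMem_SS _).1 h1
    obtain ⟨i, hi⟩ := (p.notMem_SS _).1 h2
    have hij : i ≤ j := p.FF_mono.le_iff_le.1 (by omega)
    have := hG i j hij (by omega)
    rw [hj] at this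
    exact ⟨(i, j), ⟨hij, by simp only; omega, by simp only; omega⟩, hj⟩

lemma ncard_boxX (p : Ptn) (δ : ℤ) :
    Set.ncard {q : ℕ+ × ℕ+ | q.2 < q.1 ∧ (q.2 : ℕ) ≤ p.toFun q.1 ∧ p.EE q.1 + p.EE q.2 = δ}
      = Set.ncard {m | m ∈ p.setX δ ∧ p.GG δ m ≤ -1} := by
  have hG : ∀ i j, j < i → p.EE i + p.EE j = δ →
      p.GG δ (p.EE j) = (i : ℕ) - 1 - p.transpose j := by
    intro i j hij h
    have : δ - p.EE j = p.EE i := by omega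
    unfold GG
    rw [this, p.cnt_EE hij]
    unfold EE
    ring
  apply Set.ncard_congr (fun q _ => p.EE q.2)
  · rintro ⟨i, j⟩ ⟨h1, h2, h3⟩
    have h4 := p.EE_lt h1
    have h5 := p.le_transpose_iff j i
    simp only at h1 h2 h3 h4 ⊢
    refine ⟨⟨by omega, ⟨j, rfl⟩, ⟨i, by omega⟩⟩, ?_⟩
    rw [hG i j h1 h3]
    have := h5.2 h2
    omega
  · rintro ⟨i, j⟩ ⟨i', j'⟩ ⟨h1, _, h2⟩ ⟨h1', _, h2'⟩ h
    simp only at h2 h2' h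
    have e1 := p.EE_anti.injective h
    have e2 : i = i' := p.EE_anti.injective (by omega)
    rw [e1, e2]
  · rintro m ⟨⟨h0, ⟨j, hj⟩, ⟨i, hi⟩⟩, h3⟩
    have hij : j < i := p.EE_anti.lt_iff_gt.1 (by omega)
    have := hG i j hij (by omega)
    rw [hj] at this
    exact ⟨(i, j), ⟨hij, (p.le_transpose_iff j i).1 (by omega),
      by simp only; omega⟩, hj⟩

lemma ncard_eq_sum (Q : ℤ → Prop) [DecidablePred Q] (M N : ℤ) (h : ∀ m, Q m → M ≤ m ∧ m < N) :
    ((Set.ncard {m | Q m} : ℕ) : ℤ) = ∑ m ∈ Finset.Ico M N, if Q m then 1 else 0 := by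
  have : {m | Q m} = (((Finset.Ico M N).filter Q : Finset ℤ) : Set ℤ) := by
    ext m
    simp only [Set.mem_ofPred_eq, Finset.coe_filter, Finset.mem_Ico]
    exact ⟨fun hm => ⟨h m hm, hm⟩, fun hm => hm.2⟩
  rw [this, Set.ncard_coe_finset, Finset.card_filter]
  push_cast
  rfl

lemma sum_tele (f : ℤ → ℤ) (M N : ℤ) (h : M ≤ N) :
    ∑ m ∈ Finset.Ico M N, (f (m + 1) - f m) = f N - f M := by
  induction N, h using Int.leInduction with
  | base => simp
  | succ n hn ih =>
    have : Finset.Ico M (n + 1) = insert n (Finset.Ico M n) := by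
      ext t; simp only [Finset.mem_Ico, Finset.mem_insert]; omega
    rw [this, Finset.sum_insert (by simp), ih]
    ring

end Ptn

open Classical in
lemma Ptn.count_main (p : Ptn) (δ : ℤ) :
    Set.ncard {m | m ∈ p.setO δ ∧ 1 ≤ p.GG δ m} + Set.ncard {m | m ∈ p.setX δ ∧ p.GG δ m ≤ -1}
      = min (p.setO δ).ncard (p.setX δ).ncard := by
  obtain ⟨N, hN0, hN1, hN2, hN3⟩ := p.exists_bound δ
  have bO : ∀ m, m ∈ p.setO δ → -((-δ) / 2) ≤ m ∧ m < N := by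
    rintro m ⟨h1, h2, h3⟩
    refine ⟨by omega, ?_⟩
    by_contra hc
    exact h3 (hN3 m (not_lt.mp hc)).2
  have bX : ∀ m, m ∈ p.setX δ → δ / 2 + 1 ≤ m ∧ m < N := by
    rintro m ⟨h1, h2, h3⟩
    refine ⟨by omega, ?_⟩
    by_contra hc
    exact (hN3 m (not_lt.mp hc)).1 h2
  have cO := Ptn.ncard_eq_sum (· ∈ p.setO δ) _ N bO
  have cX := Ptn.ncard_eq_sum (· ∈ p.setX δ) _ N bX
  have cO' := Ptn.ncard_eq_sum (fun m => m ∈ p.setO δ ∧ 1 ≤ p.GG δ m) _ N (fun m h => bO m h.1)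
  have cX' := Ptn.ncard_eq_sum (fun m => m ∈ p.setX δ ∧ p.GG δ m ≤ -1) _ N (fun m h => bX m h.1)
  have hstep : ∀ m ∈ Finset.Ico (δ / 2 + 1) N,
      p.GG δ (m + 1) - p.GG δ m
        = (if m ∈ p.setX δ then 1 else 0) - (if m ∈ p.setO δ then 1 else 0) := by
    intro m hm
    rw [Finset.mem_Ico] at hm
    have h : δ < 2 * m := by omega
    rw [p.GG_succ δ m h]
    simp only [Ptn.setX, Ptn.setO, Set.mem_ofPred_eq, h, h.le, true_and]
    by_cases h1 : m ∈ p.SS <;> by_cases h2 : δ - m ∈ p.SS <;> simp [h1, h2]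
  have hdisj : ∀ m, m ∈ p.setX δ → m ∉ p.setO δ := fun m h h' => h'.2.1 h.2.1
  have hstep2 : ∀ m ∈ Finset.Ico (δ / 2 + 1) N,
      max (p.GG δ (m + 1)) 0 - max (p.GG δ m) 0
        = (if m ∈ p.setX δ then 1 else 0) - (if m ∈ p.setO δ ∧ 1 ≤ p.GG δ m then 1 else 0)
          - (if m ∈ p.setX δ ∧ p.GG δ m ≤ -1 then 1 else 0) := by
    intro m hm
    have h1 := hstep m hm
    have h2 := hdisj m
    by_cases hx : m ∈ p.setX δ
    · have ho := h2 hx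
      simp only [hx, ho, if_true, if_false, true_and, false_and] at h1 ⊢
      split_ifs <;> omega
    · by_cases ho : m ∈ p.setO δ
      · simp only [hx, ho, if_true, if_false, true_and, false_and] at h1 ⊢
        split_ifs <;> omega
      · simp only [hx, ho, if_false, false_and] at h1 ⊢
        omega
  have hle : δ / 2 + 1 ≤ N := by omega
  have t1 := Ptn.sum_tele (p.GG δ) _ N hle
  have t2 := Ptn.sum_tele (fun m => max (p.GG δ m) 0) _ N hle
  rw [Finset.sum_congr rfl hstep, Finset.sum_sub_distrib, ← cX] at t1
  rw [Finset.sum_congr rfl hstep2, Finset.sum_sub_distrib, Finset.sum_sub_distrib, ← cX,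
    ← cX'] at t2
  rcases Int.even_or_odd' δ with ⟨k, hk | hk⟩
  · have e1 : -((-δ) / 2) = k := by omega
    have e2 : δ / 2 + 1 = k + 1 := by omega
    have hins : Finset.Ico k N = insert k (Finset.Ico (k + 1) N) := by
      ext t; simp only [Finset.mem_Ico, Finset.mem_insert]; omega
    have hG0 : p.GG δ k = 1 - k := by
      have : δ - k = k := by omega
      unfold Ptn.GG Ptn.cnt
      rw [this]; simp; ring
    have hG1 : p.GG δ (k + 1) = (if k ∈ p.SS then 1 else 0) - k := by
      have : Finset.Ioo (δ - (k + 1)) (k + 1) = {k} := by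
        ext t; simp only [Finset.mem_Ioo, Finset.mem_singleton]; omega
      unfold Ptn.GG Ptn.cnt
      rw [this, Finset.filter_singleton]
      split_ifs <;> simp <;> ring
    have hkO : k ∈ p.setO δ ↔ k ∉ p.SS := by
      have : δ - k = k := by omega
      simp only [Ptn.setO, Set.mem_ofPred_eq, this, and_self]
      constructor
      · exact fun h => h.2
      · exact fun h => ⟨by omega, h⟩
    rw [e1, hins, Finset.sum_insert (by simp)] at cO cO'
    rw [hG0] at cO'
    rw [e2, hG1] at t1 t2
    simp only [Set.ofPred_mem_eq, hkO] at *
    by_cases hS : k ∈ p.SS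
    · simp only [hS, not_true_eq_false, if_true, if_false, false_and] at *
      omega
    · simp only [hS, not_false_eq_true, if_true, if_false, true_and] at *
      split_ifs at cO' <;> omega
  · have e1 : -((-δ) / 2) = k + 1 := by omega
    have e2 : δ / 2 + 1 = k + 1 := by omega
    have hG1 : p.GG δ (k + 1) = - k := by
      have : Finset.Ioo (δ - (k + 1)) (k + 1) = ∅ := by
        ext t; simp only [Finset.mem_Ioo, Finset.notMem_empty, iff_false]; omega
      unfold Ptn.GG Ptn.cnt
      rw [this]; simp
    rw [e1] at cO cO'
    rw [e2, hG1] at t1 t2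
    simp only [Set.ofPred_mem_eq] at *
    omega

/-- #{(i,j) ∈ [λ] : d(i,j) = 1 − δ} = min(a, b) where a is the number of
∘'s and b = deg_δ(λ) the number of ×'s in the weight diagram x_λ. -/
theorem stmt12 (δ : ℤ) (p : Ptn) :
    Set.ncard {q : ℕ+ × ℕ+ | (q.2 : ℕ) ≤ p.toFun q.1 ∧ dbox p q.1 q.2 = 1 - δ}
      = min (Set.ncard {n : ℚ | n ∈ Lset δ ∧ IsCirc δ p n}) (degd δ p) := by
  rw [p.ncard_circ, p.ncard_times, ← p.count_main, ← p.ncard_boxO, ← p.ncard_boxX]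
  have hfin : {q : ℕ+ × ℕ+ | (q.2 : ℕ) ≤ p.toFun q.1}.Finite := by
    obtain ⟨K, hK⟩ := p.finite_support'
    apply ((Set.finite_Iic K).prod (Set.finite_Iic (⟨p.toFun 1 + 1, Nat.succ_pos _⟩ : ℕ+))).subset
    rintro ⟨i, j⟩ h
    have h : (j : ℕ) ≤ p.toFun i := h
    constructor
    · by_contra hc
      have := hK i (le_of_lt (not_le.mp hc))
      have := PNat.pos j
      omega
    · have := p.antitone' 1 i one_le
      show (j : ℕ) ≤ p.toFun 1 + 1
      omega
  rw [← Set.ncard_union_eq _ (hfin.subset fun q h => h.2.1) (hfin.subset fun q h => h.2.1)]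
  · apply congrArg Set.ncard
    ext ⟨i, j⟩
    simp only [Set.mem_ofPred_eq, Set.mem_union]
    unfold dbox Ptn.EE Ptn.FF
    rw [← PNat.coe_le_coe, ← PNat.coe_lt_coe]
    split_ifs <;> omega
  · rw [Set.disjoint_left]
    rintro q ⟨h, _⟩ ⟨h', _⟩
    exact absurd h (not_le.mpr h')
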